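/- arXiv:2102.12035 — 2 statements merged into one kernel-verified Lean document; each statement's English description precedes it below -/
import Mathlib

section
/- Converse core of Proposition 1. Let 𝒰₁,𝒰₂ be finite sets and let p be a joint pmf on {0,1}²×{0,1}²×𝒰₁×𝒰₂×({0,1}×{0,1}) of the form p(x₁,x₂,u₁,u₂,y) = p(x₁) p(x₂) p(u₁|x₁) p(u₂|x₂) p(y|u₁,u₂), whose (X₁,X₂)-marginal is that of four i.i.d. uniform bits and whose (X₁,X₂,Y)-marginal equals the Example distribution q_{X₁X₂Y}. Then I(U₁;X₁) ≥ 1, I(U₂;X₂) ≥ 1, and I(U₁;X₁) + I(U₂;X₂) ≥ 3. -/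
/-!
Write `k₁(x, u) = p(u₁ = u | x₁ = x)`, and likewise `k₂`. Since `X₁` is uniform on four points,
`I(U₁;X₁) = 2 - H(X₁|U₁)`, so the claim is `H(X₁|U₁) ≤ 1`, `H(X₂|U₂) ≤ 1` and
`H(X₁|U₁) + H(X₂|U₂) ≤ 1`.

The key point is a zero-error property (`compat`): if `x₁` and `x₂` are possible given `u₁` and `u₂`
and `y` is possible given `(u₁, u₂)`, then `y = (x₁ⱼ, x₂ⱼ)` for some `j`. Taking `x₂ = 01`, where
the second bit of `y` reveals `j`, shows that the set of `x₁` possible given `u₁` lies in some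
`{x | xⱼ = a}` (`support_sub`); so it has at most two elements and contributes at most one
bit of entropy. Call `u₁` ambiguous of type `j` (`Amb`) if this set is a full pair `{x | xⱼ = a}`.
Then `H(X₁|U₁) ≤ P(U₁ of type 1) + P(U₁ of type 2)` (`condEntropy_le`).

* Each type has probability at most `1/2` (`ambMass_le`): given `x₂ = 01`, an ambiguous `u₁` of type
  `j` forces `J = j`, an event of probability `1/2`.
* Ambiguous `u₁` and `u₂` have the same type (`amb_same`).

Hence either only one of the two users has ambiguous symbols, with total mass at most `1`, or both
have only symbols of one and the same type, with mass at most `1/2` each.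
-/

open Finset

/-- A probability mass function on a finite type. -/
def IsPMF {α : Type*} [Fintype α] (p : α → ℝ) : Prop :=
  (∀ a, 0 ≤ p a) ∧ ∑ a, p a = 1

/-- Marginal (pushforward) of a pmf `p` on `Ω` under the map `f`. -/
noncomputable def marg {Ω β : Type*} [Fintype Ω] [DecidableEq β]
    (p : Ω → ℝ) (f : Ω → β) (b : β) : ℝ :=
  ∑ ω : Ω, if f ω = b then p ω else 0

/-- Shannon entropy (in bits) of a pmf given as a function. -/
noncomputable def entPMF {β : Type*} [Fintype β] (r : β → ℝ) : ℝ :=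
  -∑ b : β, r b * Real.logb 2 (r b)

/-- Entropy (in bits) of the random variable `f` under the joint pmf `p`. -/
noncomputable def ent {Ω β : Type*} [Fintype Ω] [Fintype β] [DecidableEq β]
    (p : Ω → ℝ) (f : Ω → β) : ℝ :=
  entPMF (fun b => marg p f b)

/-- Conditional entropy `H(f | g)`. -/
noncomputable def condEnt {Ω β γ : Type*} [Fintype Ω] [Fintype β] [Fintype γ]
    [DecidableEq β] [DecidableEq γ] (p : Ω → ℝ) (f : Ω → β) (g : Ω → γ) : ℝ :=
  ent p (fun ω => (f ω, g ω)) - ent p g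

/-- Mutual information `I(f ; g)`. -/
noncomputable def mi {Ω β γ : Type*} [Fintype Ω] [Fintype β] [Fintype γ]
    [DecidableEq β] [DecidableEq γ] (p : Ω → ℝ) (f : Ω → β) (g : Ω → γ) : ℝ :=
  ent p f + ent p g - ent p (fun ω => (f ω, g ω))

/-- Conditional mutual information `I(f ; g | h)`. -/
noncomputable def cmi {Ω β γ δ : Type*} [Fintype Ω] [Fintype β] [Fintype γ] [Fintype δ]
    [DecidableEq β] [DecidableEq γ] [DecidableEq δ]
    (p : Ω → ℝ) (f : Ω → β) (g : Ω → γ) (h : Ω → δ) : ℝ :=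
  ent p (fun ω => (f ω, h ω)) + ent p (fun ω => (g ω, h ω))
    - ent p (fun ω => (f ω, g ω, h ω)) - ent p h

/-- `bsel x j` is the `j`-th bit of the two-bit string `x`. -/
def bsel (x : Bool × Bool) (j : Fin 2) : Bool := if j = 0 then x.1 else x.2

/-- The Example distribution: `X₁ = (X₁₁, X₁₂)` and `X₂ = (X₂₁, X₂₂)` are four i.i.d.
uniform bits, `J` is uniform on `{1,2}` independent of `(X₁, X₂)`, and
`Y = (X₁J, X₂J)`; `qEx` is the induced joint pmf of `(X₁, X₂, Y)`. -/
noncomputable def qEx : (Bool × Bool) × (Bool × Bool) × (Bool × Bool) → ℝ :=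
  fun a => ∑ j : Fin 2,
    (1 / 32 : ℝ) * (if a.2.2 = (bsel a.1 j, bsel a.2.1 j) then 1 else 0)

/-- `k1`, `k2` and `Y` are stochastic kernels (two encoders and a decoder), and the law of
`(X₁, X₂, Y)` they induce from uniform independent inputs is the Example distribution. -/
structure Scheme {U V : Type} [Fintype U] [Fintype V] (k1 : Bool × Bool → U → ℝ)
    (k2 : Bool × Bool → V → ℝ) (Y : U → V → Bool × Bool → ℝ) : Prop where
  pmf1 : ∀ x, IsPMF (k1 x)
  pmf2 : ∀ x, IsPMF (k2 x)
  pmfY : ∀ u v, IsPMF (Y u v)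
  law : ∀ x1 x2 y, (∑ u, ∑ v, (1 / 16 : ℝ) * k1 x1 u * k2 x2 v * Y u v y) = qEx (x1, x2, y)

/-- The two-bit string whose `j`-th bit is `a` and whose other bit is `b`. -/
def strWith (j : Fin 2) (a b : Bool) : Bool × Bool := if j = 0 then (a, b) else (b, a)

/-- `u` is ambiguous of type `j`: for some `a`, both strings with `j`-th bit `a` are possible
inputs. -/
def Amb {U : Type} (k : Bool × Bool → U → ℝ) (j : Fin 2) (u : U) : Prop :=
  ∃ a, ∀ b, 0 < k (strWith j a b) u

open Classical in
/-- The probability, under uniform input, of an ambiguous output of type `j`. -/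
noncomputable def ambMass {U : Type} [Fintype U] (k : Bool × Bool → U → ℝ) (j : Fin 2) : ℝ :=
  ∑ u, if Amb k j u then ∑ x, (1 / 4 : ℝ) * k x u else 0

/-- The contribution of the output `u` to `H(X|U)`, for uniform input `X`. -/
noncomputable def entAt {U : Type} (k : Bool × Bool → U → ℝ) (u : U) : ℝ :=
  (∑ x, (1 / 4 : ℝ) * k x u) * Real.logb 2 (∑ x, (1 / 4 : ℝ) * k x u)
    - ∑ x, (1 / 4 : ℝ) * k x u * Real.logb 2 ((1 / 4 : ℝ) * k x u)

section Combinatorics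

variable {U V : Type} [Fintype U] [Fintype V] {k1 : Bool × Bool → U → ℝ}
  {k2 : Bool × Bool → V → ℝ} {Y : U → V → Bool × Bool → ℝ}

/-- Exchanging the two users. -/
lemma Scheme.symm (h : Scheme k1 k2 Y) : Scheme k2 k1 (fun v u y => Y u v y.swap) where
  pmf1 := h.pmf2
  pmf2 := h.pmf1
  pmfY v u := by
    refine ⟨fun y => (h.pmfY u v).1 _, ?_⟩
    rw [← (h.pmfY u v).2]
    exact (Equiv.prodComm Bool Bool).sum_comp (Y u v)
  law x2 x1 y := by
    have h1 := h.law x1 x2 y.swap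
    rw [Finset.sum_comm] at h1
    have h2 : qEx (x2, x1, y) = qEx (x1, x2, y.swap) := by
      obtain ⟨a, b⟩ := y
      simp [qEx, and_comm]
    rw [h2, ← h1]
    exact Finset.sum_congr rfl fun v _ => Finset.sum_congr rfl fun u _ => by ring

lemma exists_pos {α : Type} [Fintype α] {r : α → ℝ} (h : IsPMF r) : ∃ a, 0 < r a := by
  by_contra! hn
  have h1 : ∑ a, r a ≤ 0 := Finset.sum_nonpos fun a _ => hn a
  linarith [h.2]

lemma compat (h : Scheme k1 k2 Y) {x1 x2 y} {u : U} {v : V} (h1 : 0 < k1 x1 u)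
    (h2 : 0 < k2 x2 v) (hy : 0 < Y u v y) : ∃ j, y = (bsel x1 j, bsel x2 j) := by
  by_contra! hn
  have hq : qEx (x1, x2, y) = 0 := by simp [qEx, hn]
  rw [← h.law] at hq
  have hnn : ∀ u v, 0 ≤ (1 / 16 : ℝ) * k1 x1 u * k2 x2 v * Y u v y := fun u v =>
    mul_nonneg (mul_nonneg (mul_nonneg (by norm_num) ((h.pmf1 _).1 _)) ((h.pmf2 _).1 _))
      ((h.pmfY _ _).1 _)
  have e1 := (Finset.sum_eq_zero_iff_of_nonneg
    (fun u _ => Finset.sum_nonneg fun v _ => hnn u v)).1 hq u (Finset.mem_univ _)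
  have e2 := (Finset.sum_eq_zero_iff_of_nonneg (fun v _ => hnn u v)).1 e1 v (Finset.mem_univ _)
  have : 0 < (1 / 16 : ℝ) * k1 x1 u * k2 x2 v * Y u v y := by positivity
  linarith

/-- All inputs possible given `u` share some bit. -/
lemma support_sub (h : Scheme k1 k2 Y) (u : U) :
    ∃ j a, ∀ x, k1 x u ≠ 0 → bsel x j = a := by
  obtain ⟨v, hv⟩ := exists_pos (h.pmf2 (false, true))
  obtain ⟨y, hy⟩ := exists_pos (h.pmfY u v)
  -- the other user's string is `01`, so the second bit of `y` names the selected index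
  refine ⟨if y.2 then 1 else 0, y.1, fun x hx => ?_⟩
  obtain ⟨j, hj⟩ := compat h (lt_of_le_of_ne ((h.pmf1 x).1 u) hx.symm) hv hy
  subst hj
  fin_cases j <;> simp [bsel]

/-- Against the string `01`, an ambiguous `u` of type `j` forces the index `j`. -/
lemma amb_forces (h : Scheme k1 k2 Y) {j : Fin 2} {u : U} {v : V} {y} (hu : Amb k1 j u)
    (hv : 0 < k2 (false, true) v) (hy : 0 < Y u v y) : y.2 = bsel (false, true) j := by
  obtain ⟨a, ha⟩ := hu
  have c0 := compat h (ha false) hv hy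
  have c1 := compat h (ha true) hv hy
  clear * - c0 c1
  revert j a y
  decide

lemma amb_same (h : Scheme k1 k2 Y) {j k : Fin 2} {u : U} {v : V} (hu : Amb k1 j u)
    (hv : Amb k2 k v) : j = k := by
  obtain ⟨a, ha⟩ := hu
  obtain ⟨b, hb⟩ := hv
  obtain ⟨y, hy⟩ := exists_pos (h.pmfY u v)
  have c := fun s t => compat h (ha s) (hb t) hy
  clear * - c
  revert j k a b y
  decide

open Classical in
lemma ambMass_le (h : Scheme k1 k2 Y) (j : Fin 2) : ambMass k1 j ≤ 1 / 2 := by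
  have key : ∀ x, ∑ u, (if Amb k1 j u then k1 x u else 0) ≤ 1 / 2 := by
    intro x
    have hnn : ∀ u v y, 0 ≤ k1 x u * k2 (false, true) v * Y u v y := fun u v y =>
      mul_nonneg (mul_nonneg ((h.pmf1 _).1 _) ((h.pmf2 _).1 _)) ((h.pmfY _ _).1 _)
    have step : ∀ u, (if Amb k1 j u then k1 x u else 0) ≤
        ∑ v, ∑ c, k1 x u * k2 (false, true) v * Y u v (c, bsel (false, true) j) := by
      intro u
      split_ifs with hu
      · have : k1 x u = ∑ v, k1 x u * k2 (false, true) v := by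
          rw [← Finset.mul_sum, (h.pmf2 _).2, mul_one]
        conv_lhs => rw [this]
        refine Finset.sum_le_sum fun v _ => ?_
        rw [← Finset.mul_sum]
        rcases ((h.pmf2 (false, true)).1 v).eq_or_lt with hv | hv
        · simp [← hv]
        · have hz : ∀ c, Y u v (c, !bsel (false, true) j) = 0 := by
            intro c
            by_contra hne
            have := amb_forces h hu hv (lt_of_le_of_ne ((h.pmfY u v).1 _) (Ne.symm hne))
            simp at this
          have h1 := (h.pmfY u v).2
          rw [Fintype.sum_prod_type] at h1
          have : ∑ c, Y u v (c, bsel (false, true) j) = 1 := by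
            rw [← h1]
            refine Finset.sum_congr rfl fun c _ => ?_
            have := hz c
            cases hb : bsel (false, true) j <;> simp_all
          rw [this, mul_one]
      · exact Finset.sum_nonneg fun v _ => Finset.sum_nonneg fun c _ => hnn _ _ _
    refine (Finset.sum_le_sum fun u _ => step u).trans ?_
    have e : ∑ u, ∑ v, ∑ c, k1 x u * k2 (false, true) v * Y u v (c, bsel (false, true) j)
        = 16 * ∑ c, qEx (x, (false, true), (c, bsel (false, true) j)) := by
      simp_rw [← h.law, Fintype.sum_bool, Finset.sum_add_distrib, mul_add, Finset.mul_sum]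
      congr 1 <;> exact Finset.sum_congr rfl fun u _ => Finset.sum_congr rfl fun v _ => by ring
    rw [e]
    obtain ⟨x, x'⟩ := x
    fin_cases j <;> cases x <;> cases x' <;> simp [qEx, bsel] <;> norm_num
  have e : ambMass k1 j = ∑ x, (1 / 4 : ℝ) * ∑ u, (if Amb k1 j u then k1 x u else 0) := by
    simp_rw [ambMass, Finset.mul_sum]
    rw [Finset.sum_comm]
    refine Finset.sum_congr rfl fun u _ => ?_
    split_ifs <;> simp
  rw [e]
  calc _ ≤ ∑ x : Bool × Bool, (1 / 4 : ℝ) * (1 / 2) :=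
        Finset.sum_le_sum fun x _ => mul_le_mul_of_nonneg_left (key x) (by norm_num)
    _ = 1 / 2 := by norm_num

lemma ambMass_eq_zero {k : Bool × Bool → U → ℝ} {j : Fin 2} (h : ∀ u, ¬ Amb k j u) :
    ambMass k j = 0 := by
  simp [ambMass, h]

end Combinatorics

section Entropy

/-- A two-point distribution of total mass `a + b` has unnormalised entropy at most `a + b` bits,
by concavity of `-t log t`. -/
lemma two_point {a b : ℝ} (ha : 0 ≤ a) (hb : 0 ≤ b) :
    (a + b) * Real.logb 2 (a + b) - (a * Real.logb 2 a + b * Real.logb 2 b) ≤ a + b := by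
  have hl : 0 < Real.log 2 := Real.log_pos (by norm_num)
  have hc := Real.concaveOn_negMulLog.2 (Set.mem_Ici.2 ha) (Set.mem_Ici.2 hb)
    (by norm_num : (0 : ℝ) ≤ 1 / 2) (by norm_num : (0 : ℝ) ≤ 1 / 2) (by norm_num)
  simp only [smul_eq_mul, Real.negMulLog] at hc
  rcases (add_nonneg ha hb).eq_or_lt with h0 | h0
  · have : a = 0 := by linarith
    have : b = 0 := by linarith
    subst a b
    simp
  · have e : Real.log (1 / 2 * a + 1 / 2 * b) = Real.log (a + b) - Real.log 2 := by
      rw [← Real.log_div h0.ne' (by norm_num)]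
      congr 1
      ring
    rw [e] at hc
    simp only [Real.logb]
    have : (a + b) * (Real.log (a + b) / Real.log 2)
        - (a * (Real.log a / Real.log 2) + b * (Real.log b / Real.log 2))
        = ((a + b) * Real.log (a + b) - (a * Real.log a + b * Real.log b)) / Real.log 2 := by
      field_simp
    rw [this, div_le_iff₀ hl]
    nlinarith

open Classical in
lemma entAt_le {U : Type} {k : Bool × Bool → U → ℝ} (hk : ∀ x u, 0 ≤ k x u) {u : U}
    (hs : ∃ j a, ∀ x, k x u ≠ 0 → bsel x j = a) :
    entAt k u ≤ (if Amb k 0 u then ∑ x, (1 / 4 : ℝ) * k x u else 0)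
      + (if Amb k 1 u then ∑ x, (1 / 4 : ℝ) * k x u else 0) := by
  obtain ⟨j, a, hs⟩ := hs
  have hr : 0 ≤ ∑ x, (1 / 4 : ℝ) * k x u :=
    Finset.sum_nonneg fun x _ => mul_nonneg (by norm_num) (hk x u)
  have hsum : ∀ f : ℝ → ℝ, f 0 = 0 → ∑ x, f ((1 / 4 : ℝ) * k x u)
      = f ((1 / 4 : ℝ) * k (strWith j a false) u) + f ((1 / 4 : ℝ) * k (strWith j a true) u) := by
    intro f hf
    have hz : ∀ b, k (strWith j (!a) b) u = 0 := by
      intro b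
      by_contra hne
      have := hs _ hne
      clear * - this
      revert j a b
      decide
    have h0 := hz false
    have h1 := hz true
    fin_cases j <;> cases a <;> simp [strWith] at h0 h1 <;>
      simp [Fintype.sum_prod_type, strWith, h0, h1, hf, add_comm]
  have hle : entAt k u ≤ if Amb k j u then ∑ x, (1 / 4 : ℝ) * k x u else 0 := by
    have h1 := hsum (fun t => t) rfl
    have h2 := hsum (fun t => t * Real.logb 2 t) (by simp)
    simp only [entAt] at *
    split_ifs with hA
    · rw [h2, h1]
      exact two_point (mul_nonneg (by norm_num) (hk _ _)) (mul_nonneg (by norm_num) (hk _ _))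
    · rw [h2, h1]
      have : ∃ b, k (strWith j a b) u = 0 := by
        by_contra! hn
        exact hA ⟨a, fun b => lt_of_le_of_ne (hk _ _) (hn b).symm⟩
      obtain ⟨b, hb⟩ := this
      cases b <;> simp [hb]
  refine hle.trans ?_
  fin_cases j
  · exact le_add_of_nonneg_right (by split_ifs <;> first | exact hr | exact le_rfl)
  · exact le_add_of_nonneg_left (by split_ifs <;> first | exact hr | exact le_rfl)

/-- `H(X₁|U₁) ≤ P(U₁ of type 1) + P(U₁ of type 2)`. -/
lemma condEntropy_le {U V : Type} [Fintype U] [Fintype V] {k1 : Bool × Bool → U → ℝ}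
    {k2 : Bool × Bool → V → ℝ} {Y : U → V → Bool × Bool → ℝ} (h : Scheme k1 k2 Y) :
    ∑ u, entAt k1 u ≤ ambMass k1 0 + ambMass k1 1 := by
  rw [ambMass, ambMass, ← Finset.sum_add_distrib]
  exact Finset.sum_le_sum fun u _ => entAt_le (fun x u => (h.pmf1 x).1 u) (support_sub h u)

/-- `I(U;X) = 2 - H(X|U)` whenever `(X, U)` has joint law `k(x, u) / 4`; the hypothesis `hE`
expresses that law through expectations of test functions. -/
lemma mi_eq {Ω U : Type} [Fintype Ω] [Fintype U] [DecidableEq U] {p : Ω → ℝ} {f : Ω → U}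
    {g : Ω → Bool × Bool} {k : Bool × Bool → U → ℝ} (hk : ∀ x, IsPMF (k x))
    (hE : ∀ F : Bool × Bool → U → ℝ,
      ∑ ω, F (g ω) (f ω) * p ω = ∑ x, ∑ u, F x u * ((1 / 4 : ℝ) * k x u)) :
    mi p f g = 2 - ∑ u, entAt k u := by
  have hf : ∀ u, marg p f u = ∑ x, (1 / 4 : ℝ) * k x u := by
    intro u
    have := hE fun _ u' => if u' = u then 1 else 0
    simpa [marg] using this
  have hg : ∀ x, marg p g x = 1 / 4 := by
    intro x
    have := hE fun x' _ => if x' = x then 1 else 0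
    simp only [ite_mul, one_mul, zero_mul] at this
    rw [marg, this]
    rw [Finset.sum_eq_single x (fun b _ hb => by simp [hb]) (by simp)]
    simp only [if_true]
    rw [← Finset.mul_sum, (hk x).2, mul_one]
  have hfg : ∀ u x, marg p (fun ω => (f ω, g ω)) (u, x) = (1 / 4 : ℝ) * k x u := by
    intro u x
    have := hE fun x' u' => if (u', x') = (u, x) then 1 else 0
    simp only [ite_mul, one_mul, zero_mul] at this
    rw [marg, this]
    rw [Finset.sum_eq_single x (fun b _ hb => by simp [hb]) (by simp),
      Finset.sum_eq_single u (fun b _ hb => by simp [hb]) (by simp)]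
    simp
  have hl : Real.logb 2 (1 / 4) = -2 := by
    rw [show (1 / 4 : ℝ) = 2 ^ (-2 : ℝ) by
      rw [Real.rpow_neg (by norm_num)]; norm_num]
    exact Real.logb_rpow (by norm_num) (by norm_num)
  have hG : ent p g = 2 := by
    simp only [ent, entPMF, hg, hl]
    norm_num
  rw [mi, hG]
  simp only [ent, entPMF, hf, Fintype.sum_prod_type, hfg, entAt, Finset.sum_sub_distrib]
  ring

end Entropy

/-- **Converse core of Proposition 1.**  For any joint pmf
`p(x₁,x₂,u₁,u₂,y) = p(x₁) p(x₂) p(u₁|x₁) p(u₂|x₂) p(y|u₁,u₂)` with `(X₁,X₂)`-marginal four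
i.i.d. uniform bits and `(X₁,X₂,Y)`-marginal equal to the Example distribution `qEx`, we
have `I(U₁;X₁) ≥ 1`, `I(U₂;X₂) ≥ 1`, and `I(U₁;X₁) + I(U₂;X₂) ≥ 3`. -/
theorem example_converse_core
    {U1 U2 : Type} [Fintype U1] [Fintype U2] [DecidableEq U1] [DecidableEq U2]
    (pU1c : Bool × Bool → U1 → ℝ) (pU2c : Bool × Bool → U2 → ℝ)
    (pYc : U1 → U2 → Bool × Bool → ℝ)
    (hpU1 : ∀ x1, IsPMF (pU1c x1)) (hpU2 : ∀ x2, IsPMF (pU2c x2))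
    (hpY : ∀ u1 u2, IsPMF (pYc u1 u2))
    (p : (Bool × Bool) × (Bool × Bool) × U1 × U2 × (Bool × Bool) → ℝ)
    (hpdef : ∀ x1 x2 u1 u2 y,
      p (x1, x2, u1, u2, y) = (1 / 16 : ℝ) * pU1c x1 u1 * pU2c x2 u2 * pYc u1 u2 y)
    (hmarg : ∀ x1 x2 y,
      (∑ u1 : U1, ∑ u2 : U2, (1 / 16 : ℝ) * pU1c x1 u1 * pU2c x2 u2 * pYc u1 u2 y)
        = qEx (x1, x2, y)) :
    1 ≤ mi p (fun ω => ω.2.2.1) (fun ω => ω.1) ∧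
    1 ≤ mi p (fun ω => ω.2.2.2.1) (fun ω => ω.2.1) ∧
    3 ≤ mi p (fun ω => ω.2.2.1) (fun ω => ω.1)
        + mi p (fun ω => ω.2.2.2.1) (fun ω => ω.2.1) := by
  have h : Scheme pU1c pU2c pYc := ⟨hpU1, hpU2, hpY, hmarg⟩
  have m1 : mi p (fun ω => ω.2.2.1) (fun ω => ω.1) = 2 - ∑ u, entAt pU1c u := by
    refine mi_eq hpU1 fun F => ?_
    simp only [Fintype.sum_prod_type (α₁ := Bool × Bool) (α₂ := (Bool × Bool) × _),
      Fintype.sum_prod_type (α₁ := Bool × Bool) (α₂ := U1 × _),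
      Fintype.sum_prod_type (α₁ := U1), Fintype.sum_prod_type (α₁ := U2), hpdef,
      ← Finset.mul_sum, (hpY _ _).2, (hpU2 _).2, mul_one]
    refine Finset.sum_congr rfl fun x _ => ?_
    rw [Finset.sum_const, Finset.smul_sum]
    refine Finset.sum_congr rfl fun u _ => ?_
    simp
    ring
  have m2 : mi p (fun ω => ω.2.2.2.1) (fun ω => ω.2.1) = 2 - ∑ u, entAt pU2c u := by
    refine mi_eq hpU2 fun F => ?_
    simp only [Fintype.sum_prod_type (α₁ := Bool × Bool) (α₂ := (Bool × Bool) × _),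
      Fintype.sum_prod_type (α₁ := Bool × Bool) (α₂ := U1 × _),
      Fintype.sum_prod_type (α₁ := U1), Fintype.sum_prod_type (α₁ := U2), hpdef,
      ← Finset.mul_sum, (hpY _ _).2, mul_one]
    rw [Finset.sum_comm]
    refine Finset.sum_congr rfl fun x _ => ?_
    have e : ∀ x1, ∑ u1, ∑ u2, F x u2 * (1 / 16 * pU1c x1 u1 * pU2c x u2)
        = ∑ u2, F x u2 * (1 / 16 * pU2c x u2) := by
      intro x1
      rw [Finset.sum_comm]
      refine Finset.sum_congr rfl fun u2 _ => ?_
      rw [← Finset.mul_sum, ← Finset.sum_mul, ← Finset.mul_sum, (hpU1 x1).2, mul_one]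
    simp only [e]
    rw [Finset.sum_const, Finset.smul_sum]
    refine Finset.sum_congr rfl fun u _ => ?_
    simp
    ring
  rw [m1, m2]
  have b1 := condEntropy_le h
  have b2 := condEntropy_le h.symm
  have a0 := ambMass_le h 0
  have a1 := ambMass_le h 1
  have c0 := ambMass_le h.symm 0
  have c1 := ambMass_le h.symm 1
  -- ambiguous symbols of different types never coexist
  have z : ∀ j k, j ≠ k → ambMass pU1c j = 0 ∨ ambMass pU2c k = 0 := by
    intro j k hjk
    by_cases hj : ∃ u, Amb pU1c j u
    · obtain ⟨u, hu⟩ := hj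
      exact .inr (ambMass_eq_zero fun v hv => hjk (amb_same h hu hv))
    · exact .inl (ambMass_eq_zero fun u hu => hj ⟨u, hu⟩)
  refine ⟨by linarith, by linarith, ?_⟩
  rcases z 0 1 (by decide) with z1 | z1 <;> rcases z 1 0 (by decide) with z2 | z2 <;> linarith
end

section
/- Claim 2. Let 𝒰 be a finite set and let p be a joint pmf of the form p(x₁,x₂,u,y) = p(x₁) p(x₂) p(u|x₁) p(y|u,x₂), whose (X₁,X₂)-marginal is that of four i.i.d. uniform bits and whose (X₁,X₂,Y)-marginal equals the Example distribution q_{X₁X₂Y}. If H(X₁|U) > 0, then for every u with P(U=u) > 0 and H(X₁|U=u) > 0, there exists k ∈ {1,2} such that H(X₁ₖ|U=u) = 0. -/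
/-!
Fix `u` and let `S` be the set of `x₁` with `p(u|x₁) > 0`. Feed in `x₂ = (0,1)`, whose two bits
differ, so that the second bit of `Y` reveals `J`. For `x₁ ∈ S`, the pmf `p(·|u,x₂)` must be
supported on `{(x₁₁,0), (x₁₂,1)}` (`pYc_eq_zero`). If neither bit were constant on `S`, every value
of `y` would be excluded by some `x₁ ∈ S`, contradicting that `p(·|u,x₂)` has total mass one. So some
bit `k` is constant on `S` (`exists_constant_bit`), and the conditional law of `X₁ₖ` given `U = u`
is a point mass, which has zero entropy (`entPMF_condPMF_eq_zero`).
-/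

open Finset

/-- The conditional pmf of `f` given the event `g = c`, under the joint pmf `p`. -/
noncomputable def condPMF {Ω β γ : Type*} [Fintype Ω] [DecidableEq β] [DecidableEq γ]
    (p : Ω → ℝ) (f : Ω → β) (g : Ω → γ) (c : γ) : β → ℝ :=
  fun b => marg p (fun ω => (f ω, g ω)) (b, c) / marg p g c

/-- An output `y` that has probability zero under the Example given `(x₁,x₂)` cannot be produced
from any `u` compatible with `x₁`: a vanishing sum of nonnegative terms vanishes termwise. -/
lemma pYc_eq_zero {U : Type} [Fintype U]
    {pUc : Bool × Bool → U → ℝ} {pYc : U → Bool × Bool → Bool × Bool → ℝ}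
    (hpU : ∀ x1, IsPMF (pUc x1)) (hpY : ∀ u x2, IsPMF (pYc u x2))
    (hmarg : ∀ x1 x2 y,
      (∑ u : U, (1 / 16 : ℝ) * pUc x1 u * pYc u x2 y) = qEx (x1, x2, y))
    {u : U} {x1 x2 y : Bool × Bool} (hu : pUc x1 u ≠ 0)
    (hy : ∀ j : Fin 2, y ≠ (bsel x1 j, bsel x2 j)) : pYc u x2 y = 0 := by
  have hq : qEx (x1, x2, y) = 0 := by
    unfold qEx
    exact Finset.sum_eq_zero fun j _ => by simp [hy j]
  have hsum := hmarg x1 x2 y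
  rw [hq, Finset.sum_eq_zero_iff_of_nonneg] at hsum
  · have h := hsum u (Finset.mem_univ u)
    simpa [hu] using h
  · intro v _
    exact mul_nonneg (mul_nonneg (by norm_num) ((hpU x1).1 v)) ((hpY v x2).1 y)

lemma exists_constant_bit {U : Type} [Fintype U]
    {pUc : Bool × Bool → U → ℝ} {pYc : U → Bool × Bool → Bool × Bool → ℝ}
    (hpU : ∀ x1, IsPMF (pUc x1)) (hpY : ∀ u x2, IsPMF (pYc u x2))
    (hmarg : ∀ x1 x2 y,
      (∑ u : U, (1 / 16 : ℝ) * pUc x1 u * pYc u x2 y) = qEx (x1, x2, y))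
    (u : U) : ∃ (k : Fin 2) (b : Bool), ∀ x1, pUc x1 u ≠ 0 → bsel x1 k = b := by
  by_contra! hcon
  have hzero : ∀ y, pYc u (false, true) y = 0 := by
    rintro ⟨b, c⟩
    -- The second output bit `c` determines which bit of `x₁` was observed.
    obtain ⟨x1, hu, hb⟩ := hcon (if c then 1 else 0) b
    refine pYc_eq_zero hpU hpY hmarg hu fun j hj => ?_
    fin_cases j <;> cases c <;> simp_all [bsel]
  have hone := (hpY u (false, true)).2
  simp [hzero] at hone

/-- If `f = b` almost surely on the event `g = c` of positive probability, then the conditional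
law of `f` is the point mass at `b`, of zero entropy. -/
lemma entPMF_condPMF_eq_zero {Ω β γ : Type*} [Fintype Ω] [Fintype β] [DecidableEq β]
    [DecidableEq γ] {p : Ω → ℝ} {f : Ω → β} {g : Ω → γ} {c : γ} {b : β}
    (hc : 0 < marg p g c) (hf : ∀ ω, g ω = c → p ω ≠ 0 → f ω = b) :
    entPMF (condPMF p f g c) = 0 := by
  have hcond : ∀ b', condPMF p f g c b' = if b' = b then 1 else 0 := by
    intro b'
    unfold condPMF
    split_ifs with hb
    · rw [div_eq_one_iff_eq hc.ne']
      unfold marg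
      refine Finset.sum_congr rfl fun ω _ => ?_
      have := hf ω
      simp only [Prod.mk.injEq]
      grind
    · rw [div_eq_zero_iff]
      left
      refine Finset.sum_eq_zero fun ω _ => ?_
      have := hf ω
      simp only [Prod.mk.injEq]
      grind
  unfold entPMF
  rw [neg_eq_zero]
  refine Finset.sum_eq_zero fun b' _ => ?_
  rw [hcond b']
  split_ifs <;> simp

/-- **Claim 2.**  For any joint pmf `p(x₁,x₂,u,y) = p(x₁) p(x₂) p(u|x₁) p(y|u,x₂)` with
`(X₁,X₂)`-marginal four i.i.d. uniform bits and `(X₁,X₂,Y)`-marginal equal to the Example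
distribution `qEx`, if `H(X₁|U) > 0`, then for every `u` with `P(U=u) > 0` and
`H(X₁|U=u) > 0` there is `k ∈ {1,2}` with `H(X₁ₖ|U=u) = 0`. -/
theorem example_claim2
    {U : Type} [Fintype U] [DecidableEq U]
    (pUc : Bool × Bool → U → ℝ) (pYc : U → Bool × Bool → Bool × Bool → ℝ)
    (hpU : ∀ x1, IsPMF (pUc x1)) (hpY : ∀ u x2, IsPMF (pYc u x2))
    (p : (Bool × Bool) × (Bool × Bool) × U × (Bool × Bool) → ℝ)
    (hpdef : ∀ x1 x2 u y,
      p (x1, x2, u, y) = (1 / 16 : ℝ) * pUc x1 u * pYc u x2 y)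
    (hmarg : ∀ x1 x2 y,
      (∑ u : U, (1 / 16 : ℝ) * pUc x1 u * pYc u x2 y) = qEx (x1, x2, y))
    (hH : 0 < condEnt p (fun ω => ω.1) (fun ω => ω.2.2.1)) :
    ∀ u : U, 0 < marg p (fun ω => ω.2.2.1) u →
      0 < entPMF (condPMF p (fun ω => ω.1) (fun ω => ω.2.2.1) u) →
      ∃ k : Fin 2,
        entPMF (condPMF p (fun ω => bsel ω.1 k) (fun ω => ω.2.2.1) u) = 0 := by
  intro u hu _
  obtain ⟨k, b, hk⟩ := exists_constant_bit hpU hpY hmarg u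
  refine ⟨k, entPMF_condPMF_eq_zero (b := b) hu ?_⟩
  rintro ⟨x1, x2, v, y⟩ rfl hp
  refine hk x1 fun h0 => hp ?_
  simp [hpdef, h0]
end
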